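/- (Proposition: reduction at w = 1) With the zero-drift mostly symmetric setup and running assumptions ε = n^{-α}, δ = n^{-β} (1/2 < α < 2β, α + β > 1, 1/3 < β < 1/2), the integrals I_n = (2πi)^{-d} ∫_{N_1} [(1+z_1)···(1+z_{d-1}) / (B(ẑ) · z_1···z_d)] · [(B(ẑ) - z_d^2 A(ẑ)) / (1 - z_d)] · S̄(z)^n dz and J_n = π^{-d} ∫_{(-δ,δ)^d} S̄(e^{iθ_1},…,e^{iθ_d})^n dθ are asymptotically equivalent: I_n / J_n → 1 as n → ∞. -/

import Mathlib

open Finset Filter MeasureTheory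
open scoped Classical Real

noncomputable section

/-- Total weight of walks of length `n` with steps in `S` (weighted by `w`),
starting at the origin and never leaving `ℕ^d`. -/
def walkWeight (d : ℕ) (S : Finset (Fin d → ℤ)) (w : (Fin d → ℤ) → ℝ) (n : ℕ) : ℝ :=
  ∑ f : Fin n → {i // i ∈ S},
    if ∀ m : ℕ, m ≤ n → ∀ j : Fin d,
        0 ≤ ∑ k ∈ Finset.univ.filter (fun k : Fin n => (k : ℕ) < m), ((f k : Fin d → ℤ) j)
    then ∏ k : Fin n, w (f k) else 0

/-- The step set `S` (with weights `w`) is symmetric over the `k`-th coordinate axis. -/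
def SymmetricAxis (d : ℕ) (S : Finset (Fin d → ℤ)) (w : (Fin d → ℤ) → ℝ) (k : Fin d) : Prop :=
  ∀ i ∈ S, Function.update i k (-(i k)) ∈ S ∧ w (Function.update i k (-(i k))) = w i

namespace ZeroDrift

variable (d : ℕ) (S : Finset (Fin (d + 1) → ℤ)) (w : (Fin (d + 1) → ℤ) → ℝ)

/-- `S(1)`, the total weight of the step set. -/
def S1 : ℝ := ∑ i ∈ S, w i

/-- `A(ẑ)`: the Laurent polynomial collecting steps with last coordinate `-1`. -/
def AC (z : Fin (d + 1) → ℂ) : ℂ :=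
  ∑ i ∈ S.filter fun i => i (Fin.last d) = -1,
    (w i : ℂ) * ∏ j : Fin d, z (Fin.castSucc j) ^ (i (Fin.castSucc j))

/-- `B(ẑ)`: the Laurent polynomial collecting steps with last coordinate `1`. -/
def BC (z : Fin (d + 1) → ℂ) : ℂ :=
  ∑ i ∈ S.filter fun i => i (Fin.last d) = 1,
    (w i : ℂ) * ∏ j : Fin d, z (Fin.castSucc j) ^ (i (Fin.castSucc j))

/-- `Q(ẑ)`: the Laurent polynomial collecting steps with last coordinate `0`. -/
def QC (z : Fin (d + 1) → ℂ) : ℂ :=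
  ∑ i ∈ S.filter fun i => i (Fin.last d) = 0,
    (w i : ℂ) * ∏ j : Fin d, z (Fin.castSucc j) ^ (i (Fin.castSucc j))

/-- The characteristic Laurent polynomial `S(z)` evaluated at `z : ℂ^{d+1}`. -/
def SC (z : Fin (d + 1) → ℂ) : ℂ :=
  ∑ i ∈ S, (w i : ℂ) * ∏ j : Fin (d + 1), z j ^ (i j)

/-- `S̄(z) = S(z_1,…,z_{d},1/z_{d+1})` evaluated at `z : ℂ^{d+1}`. -/
def SbarC (z : Fin (d + 1) → ℂ) : ℂ :=
  ∑ i ∈ S, (w i : ℂ) *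
    (∏ j : Fin d, z (Fin.castSucc j) ^ (i (Fin.castSucc j))) *
    z (Fin.last d) ^ (-(i (Fin.last d)))

/-- The numerator `G(z,t)` of the diagonal representation. -/
def GC (z : Fin (d + 1) → ℂ) (t : ℂ) : ℂ :=
  (∏ j : Fin d, (1 + z (Fin.castSucc j))) *
    (1 - t * (∏ j, z j) * (QC d S w z + 2 * z (Fin.last d) * AC d S w z))

/-- The denominator `H(z,t) = H_1 H_2 H_3` of the diagonal representation. -/
def HC (z : Fin (d + 1) → ℂ) (t : ℂ) : ℂ :=
  (1 - z (Fin.last d)) * (1 - t * (∏ j, z j) * SbarC d S w z) *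
    (1 - t * (∏ j, z j) * (QC d S w z + z (Fin.last d) * AC d S w z))

/-- The point of `ℂ^{d+1}` with coordinates `i^{m_j}` encoded by `m : Fin (d+1) → Fin 4`. -/
def wOf (m : Fin (d + 1) → Fin 4) : Fin (d + 1) → ℂ :=
  fun j => Complex.I ^ (m j : ℕ)

/-- The (indices of the) finite set `Γ` of possible contributing points: `w_j ∈ {±1}` for
`j ≤ d`, `w_{d+1} ∈ {±1,±i}`, and `|1/(w_1⋯w_{d+1} S(w))| = 1/S(1)`. -/
def GammaIdx : Finset (Fin (d + 1) → Fin 4) :=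
  Finset.univ.filter fun m =>
    (∀ j : Fin d, m (Fin.castSucc j) = 0 ∨ m (Fin.castSucc j) = 2) ∧
    ‖1 / ((∏ j, wOf d m j) * SC d S w (wOf d m))‖ = 1 / S1 d S w

/-- The argument (angle) of the point encoded by `m` in coordinate `j`. -/
def argOf (m : Fin (d + 1) → Fin 4) (j : Fin (d + 1)) : ℝ := (m j : ℕ) * π / 2

/-- The box of angles parametrizing the product of arcs `N_w` for `w = wOf m`. -/
def box (m : Fin (d + 1) → Fin 4) (δ : ℝ) : Set (Fin (d + 1) → ℝ) :=
  Set.univ.pi fun j => Set.Ioo (argOf d m j - δ) (argOf d m j + δ)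

/-- The parametrization of the torus `|z_j| = 1` (`j ≤ d`), `|z_{d+1}| = 1 - ε`. -/
def zOf (ε : ℝ) (θ : Fin (d + 1) → ℝ) : Fin (d + 1) → ℂ :=
  fun j => (if j = Fin.last d then (1 - ε : ℂ) else 1) * Complex.exp (Complex.I * θ j)

/-- Angles parametrizing `N = ⋃_{w ∈ Γ} N_w`. -/
def Nparam (δ : ℝ) : Set (Fin (d + 1) → ℝ) := ⋃ m ∈ GammaIdx d S w, box d m δ

/-- The contour integral `(2πi)^{-(d+2)} ∫_{N × C} G/H · dz dt/(z_1⋯z_{d+1}t)^{n+1}`,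
parametrized by angles, where `C` is the circle `|t| = r`. -/
def fullIntegral (n : ℕ) (ε δ r : ℝ) : ℂ :=
  (((2 * π) ^ (d + 2) : ℝ))⁻¹ •
    ∫ θ in Nparam d S w δ,
      ∫ φ in Set.Ioo 0 (2 * π),
        GC d S w (zOf d ε θ) ((r : ℂ) * Complex.exp (Complex.I * φ)) /
            HC d S w (zOf d ε θ) ((r : ℂ) * Complex.exp (Complex.I * φ)) *
          (((∏ j, zOf d ε θ j) * ((r : ℂ) * Complex.exp (Complex.I * φ))) ^ n)⁻¹

/-- The residue integrand
`[(1+z_1)⋯(1+z_d)/(B(ẑ) z_1⋯z_{d+1})]·[(B(ẑ) - z_{d+1}^2 A(ẑ))/(1-z_{d+1})]·S̄(z)^n`,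
parametrized by angles, including the Jacobian factors `i z_j` of `dz_j`. -/
def resIntegrand (n : ℕ) (ε : ℝ) (θ : Fin (d + 1) → ℝ) : ℂ :=
  ((∏ j : Fin d, (1 + zOf d ε θ (Fin.castSucc j))) /
      (BC d S w (zOf d ε θ) * ∏ j, zOf d ε θ j)) *
    ((BC d S w (zOf d ε θ) - zOf d ε θ (Fin.last d) ^ 2 * AC d S w (zOf d ε θ)) /
      (1 - zOf d ε θ (Fin.last d))) *
    SbarC d S w (zOf d ε θ) ^ n *
    ∏ j, Complex.I * zOf d ε θ j

/-- The contour integral `∫_{N_w} (residue integrand) dz` over the product of arcs `N_w`,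
`w = wOf m`, parametrized by angles. -/
def resIntegral (n : ℕ) (ε δ : ℝ) (m : Fin (d + 1) → Fin 4) : ℂ :=
  ∫ θ in box d m δ, resIntegrand d S w n ε θ

end ZeroDrift

namespace ZeroDrift

/-- The argument of the monomial of `S̄` attached to the step `i`, at the point `e^{iθ}`. -/
def phase (d : ℕ) (i : Fin (d + 1) → ℤ) (θ : Fin (d + 1) → ℝ) : ℝ :=
  ∑ j : Fin d, (i (Fin.castSucc j) : ℝ) * θ (Fin.castSucc j) - i (Fin.last d) * θ (Fin.last d)

/-- The argument of the monomial in the first `d` variables attached to the step `i`. -/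
def phaseHat (d : ℕ) (i : Fin (d + 1) → ℤ) (θ : Fin (d + 1) → ℝ) : ℝ :=
  ∑ j : Fin d, (i (Fin.castSucc j) : ℝ) * θ (Fin.castSucc j)

/-- The real part of `S̄(e^{iθ})`. -/
def SbarRe (d : ℕ) (S : Finset (Fin (d + 1) → ℤ)) (w : (Fin (d + 1) → ℤ) → ℝ)
    (θ : Fin (d + 1) → ℝ) : ℝ :=
  ∑ i ∈ S, w i * Real.cos (phase d i θ)

section Parametrization

variable {d : ℕ}

lemma zOf_castSucc (ε : ℝ) (θ : Fin (d + 1) → ℝ) (j : Fin d) :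
    zOf d ε θ (Fin.castSucc j) = Complex.exp (Complex.I * θ (Fin.castSucc j)) := by
  simp [zOf, (Fin.castSucc_lt_last j).ne]

lemma zOf_last (ε : ℝ) (θ : Fin (d + 1) → ℝ) :
    zOf d ε θ (Fin.last d) = (1 - ε : ℂ) * Complex.exp (Complex.I * θ (Fin.last d)) := by
  simp [zOf]

lemma zOf_zero (θ : Fin (d + 1) → ℝ) :
    zOf d 0 θ = fun j => Complex.exp (Complex.I * θ j) := by
  funext j
  simp [zOf]

lemma prod_zOf_zpow (ε : ℝ) (θ : Fin (d + 1) → ℝ) (i : Fin (d + 1) → ℤ) :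
    ∏ j : Fin d, zOf d ε θ (Fin.castSucc j) ^ (i (Fin.castSucc j)) =
      Complex.exp (Complex.I * phaseHat d i θ) := by
  simp only [zOf_castSucc, phaseHat, ← Complex.exp_int_mul]
  rw [← Complex.exp_sum]
  congr 1
  push_cast
  rw [Finset.mul_sum]
  exact Finset.sum_congr rfl fun j _ => by ring

lemma SbarC_zOf (S : Finset (Fin (d + 1) → ℤ)) (w : (Fin (d + 1) → ℤ) → ℝ) (ε : ℝ)
    (θ : Fin (d + 1) → ℝ) :
    SbarC d S w (zOf d ε θ) = ∑ i ∈ S, (w i : ℂ) *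
      (Complex.exp (Complex.I * phase d i θ) * (1 - ε : ℂ) ^ (-(i (Fin.last d)))) := by
  unfold SbarC
  refine Finset.sum_congr rfl fun i _ => ?_
  rw [prod_zOf_zpow, zOf_last, mul_zpow, ← Complex.exp_int_mul]
  have : Complex.exp (Complex.I * phase d i θ) = Complex.exp (Complex.I * phaseHat d i θ) *
      Complex.exp (((-(i (Fin.last d)) : ℤ) : ℂ) * (Complex.I * θ (Fin.last d))) := by
    rw [← Complex.exp_add]
    congr 1
    simp only [phase, phaseHat]
    push_cast
    ring
  rw [this]
  ring

lemma abs_phaseHat_le {i : Fin (d + 1) → ℤ} (hi : ∀ j, i j = -1 ∨ i j = 0 ∨ i j = 1)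
    {θ : Fin (d + 1) → ℝ} {δ : ℝ} (hθ : ∀ j, |θ j| ≤ δ) :
    |phaseHat d i θ| ≤ d * δ := by
  unfold phaseHat
  refine (Finset.abs_sum_le_sum_abs _ _).trans ?_
  refine (Finset.sum_le_card_nsmul _ _ δ fun j _ => ?_).trans (by simp)
  have := hθ (Fin.castSucc j)
  have h0 := (abs_nonneg _).trans this
  rcases hi (Fin.castSucc j) with h | h | h <;> simp [h, this, h0]

lemma abs_phase_le {i : Fin (d + 1) → ℤ} (hi : ∀ j, i j = -1 ∨ i j = 0 ∨ i j = 1)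
    {θ : Fin (d + 1) → ℝ} {δ : ℝ} (hθ : ∀ j, |θ j| ≤ δ) :
    |phase d i θ| ≤ (d + 1) * δ := by
  have h1 := abs_phaseHat_le hi hθ
  have h2 : |(i (Fin.last d) : ℝ) * θ (Fin.last d)| ≤ δ := by
    have := hθ (Fin.last d)
    have h0 := (abs_nonneg _).trans this
    rcases hi (Fin.last d) with h | h | h <;> simp [h, this, h0]
  have h3 := abs_sub (phaseHat d i θ) ((i (Fin.last d) : ℝ) * θ (Fin.last d))
  have h4 : phase d i θ = phaseHat d i θ - (i (Fin.last d) : ℝ) * θ (Fin.last d) := rfl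
  rw [h4]
  linarith

end Parametrization

section Symmetry

variable {d : ℕ} {S : Finset (Fin (d + 1) → ℤ)} {w : (Fin (d + 1) → ℤ) → ℝ}

lemma _root_.SymmetricAxis.sum_mul_coord_eq_zero {D : ℕ} {T : Finset (Fin D → ℤ)}
    {v : (Fin D → ℤ) → ℝ} {k : Fin D} (h : SymmetricAxis D T v k) :
    ∑ i ∈ T, v i * (i k : ℝ) = 0 := by
  have key : ∑ i ∈ T, v i * (i k : ℝ) = ∑ i ∈ T, -(v i * (i k : ℝ)) := by
    refine Finset.sum_nbij' (fun i => Function.update i k (-(i k)))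
      (fun i => Function.update i k (-(i k))) (fun i hi => (h i hi).1) (fun i hi => (h i hi).1)
      (fun i _ => by simp) (fun i _ => by simp) fun i hi => ?_
    simp [(h i hi).2]
  rw [Finset.sum_neg_distrib] at key
  linarith

lemma symmetricAxis_filter_last {k : Fin d} (h : SymmetricAxis (d + 1) S w (Fin.castSucc k))
    (c : ℤ) :
    SymmetricAxis (d + 1) (S.filter fun i => i (Fin.last d) = c) w (Fin.castSucc k) := by
  intro i hi
  rw [Finset.mem_filter] at hi
  refine ⟨Finset.mem_filter.2 ⟨(h i hi.1).1, ?_⟩, (h i hi.1).2⟩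
  rw [Function.update_of_ne (Fin.castSucc_lt_last k).ne']
  exact hi.2

lemma sum_mul_phaseHat_eq_zero (h : ∀ k : Fin d, SymmetricAxis (d + 1) S w (Fin.castSucc k))
    (θ : Fin (d + 1) → ℝ) : ∑ i ∈ S, w i * phaseHat d i θ = 0 := by
  simp only [phaseHat, Finset.mul_sum]
  rw [Finset.sum_comm]
  refine Finset.sum_eq_zero fun j _ => ?_
  simp only [← mul_assoc]
  rw [← Finset.sum_mul, (h j).sum_mul_coord_eq_zero, zero_mul]

/-- Under zero drift, steps forwards and backwards in the last coordinate have equal weight. -/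
lemma sum_mul_last (hstep : ∀ i ∈ S, ∀ j, i j = -1 ∨ i j = 0 ∨ i j = 1)
    (hzero : (∑ i ∈ S.filter fun i => i (Fin.last d) = -1, w i)
        = ∑ i ∈ S.filter fun i => i (Fin.last d) = 1, w i)
    (h : ℤ → ℝ) (h0 : h 0 = 0) :
    ∑ i ∈ S, w i * h (i (Fin.last d)) =
      (∑ i ∈ S.filter fun i => i (Fin.last d) = 1, w i) * (h 1 + h (-1)) := by
  have : ∑ i ∈ S, w i * h (i (Fin.last d)) =
      ∑ i ∈ S, ((if i (Fin.last d) = 1 then w i else 0) * h 1 +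
        (if i (Fin.last d) = -1 then w i else 0) * h (-1)) := by
    refine Finset.sum_congr rfl fun i hi => ?_
    rcases hstep i hi (Fin.last d) with e | e | e <;> simp [e, h0]
  rw [this, Finset.sum_add_distrib, ← Finset.sum_mul, ← Finset.sum_mul, ← Finset.sum_filter,
    ← Finset.sum_filter, hzero]
  ring

lemma sum_mul_phase_eq_zero (hstep : ∀ i ∈ S, ∀ j, i j = -1 ∨ i j = 0 ∨ i j = 1)
    (hsym : ∀ k : Fin d, SymmetricAxis (d + 1) S w (Fin.castSucc k))
    (hzero : (∑ i ∈ S.filter fun i => i (Fin.last d) = -1, w i)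
        = ∑ i ∈ S.filter fun i => i (Fin.last d) = 1, w i)
    (θ : Fin (d + 1) → ℝ) : ∑ i ∈ S, w i * phase d i θ = 0 := by
  have h1 := sum_mul_phaseHat_eq_zero hsym θ
  have h2 := sum_mul_last hstep hzero (fun m => (m : ℝ)) (by simp)
  have h3 : ∀ i, w i * phase d i θ =
      w i * phaseHat d i θ - w i * (i (Fin.last d) : ℝ) * θ (Fin.last d) := fun i => by
    simp only [phase, phaseHat]
    ring
  simp only [h3]
  rw [Finset.sum_sub_distrib, ← Finset.sum_mul, h1, h2]
  simp

end Symmetry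

section Bounds

variable {d : ℕ} {S : Finset (Fin (d + 1) → ℤ)} {w : (Fin (d + 1) → ℤ) → ℝ}

lemma S1_nonneg (hw : ∀ i ∈ S, 0 < w i) : 0 ≤ S1 d S w :=
  Finset.sum_nonneg fun i hi => (hw i hi).le

lemma norm_sum_weight_le (hw : ∀ i ∈ S, 0 < w i) {f : (Fin (d + 1) → ℤ) → ℂ} {C : ℝ}
    (hf : ∀ i ∈ S, ‖f i‖ ≤ C) : ‖∑ i ∈ S, (w i : ℂ) * f i‖ ≤ S1 d S w * C := by
  rw [S1, Finset.sum_mul]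
  refine norm_sum_le_of_le _ fun i hi => ?_
  rw [norm_mul, Complex.norm_real, Real.norm_of_nonneg (hw i hi).le]
  exact mul_le_mul_of_nonneg_left (hf i hi) (hw i hi).le

/-- A symmetric weighted exponential sum differs from its value at `θ = 0` by a quadratic error. -/
lemma norm_sum_exp_phaseHat_sub_le (hstep : ∀ i ∈ S, ∀ j, i j = -1 ∨ i j = 0 ∨ i j = 1)
    (hw : ∀ i ∈ S, 0 < w i)
    (hsym : ∀ k : Fin d, SymmetricAxis (d + 1) S w (Fin.castSucc k))
    {θ : Fin (d + 1) → ℝ} {δ : ℝ} (hθ : ∀ j, |θ j| ≤ δ) (hδ : d * δ ≤ 1) :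
    ‖∑ i ∈ S, (w i : ℂ) * Complex.exp (Complex.I * phaseHat d i θ) - (S1 d S w : ℂ)‖ ≤
      S1 d S w * (d * δ) ^ 2 := by
  have h0 : ∑ i ∈ S, (w i : ℂ) * (phaseHat d i θ : ℂ) = 0 := by
    exact_mod_cast sum_mul_phaseHat_eq_zero hsym θ
  have : ∑ i ∈ S, (w i : ℂ) * Complex.exp (Complex.I * phaseHat d i θ) - (S1 d S w : ℂ) =
      ∑ i ∈ S, (w i : ℂ) *
        (Complex.exp (Complex.I * phaseHat d i θ) - 1 - Complex.I * phaseHat d i θ) := by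
    have h1 : ∀ i, (w i : ℂ) *
        (Complex.exp (Complex.I * phaseHat d i θ) - 1 - Complex.I * phaseHat d i θ) =
        (w i : ℂ) * Complex.exp (Complex.I * phaseHat d i θ) - w i -
          Complex.I * ((w i : ℂ) * phaseHat d i θ) := fun i => by ring
    simp only [h1]
    rw [Finset.sum_sub_distrib, Finset.sum_sub_distrib, ← Finset.mul_sum, h0, S1]
    push_cast
    ring
  rw [this]
  refine norm_sum_weight_le hw fun i hi => ?_
  have hb := abs_phaseHat_le (hstep i hi) hθ
  have hn : ‖Complex.I * (phaseHat d i θ : ℂ)‖ = |phaseHat d i θ| := by simp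
  refine (Complex.norm_exp_sub_one_sub_id_le (by rw [hn]; linarith)).trans ?_
  rw [hn]
  gcongr

lemma _root_.Real.abs_sin_sub_self_le {x : ℝ} (hx : |x| ≤ 1) : |Real.sin x - x| ≤ |x| ^ 3 := by
  have h := Real.sin_bound hx
  have h1 : |Real.sin x - x| ≤ |Real.sin x - (x - x ^ 3 / 6)| + |x ^ 3 / 6| := by
    have := abs_sub (Real.sin x - (x - x ^ 3 / 6)) (x ^ 3 / 6)
    rwa [show Real.sin x - (x - x ^ 3 / 6) - x ^ 3 / 6 = Real.sin x - x by ring] at this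
  have h2 : |x ^ 3 / 6| = |x| ^ 3 / 6 := by rw [abs_div, abs_pow]; norm_num
  have h3 : |x| ^ 5 ≤ |x| ^ 3 := pow_le_pow_of_le_one (abs_nonneg x) hx (by norm_num)
  have h4 : 0 ≤ |x| ^ 3 := by positivity
  linarith

lemma abs_one_sub_zpow_neg_sub_one_le {ε : ℝ} (h0 : 0 ≤ ε) (h1 : ε ≤ 1 / 2) {m : ℤ}
    (hm : m = -1 ∨ m = 0 ∨ m = 1) : |(1 - ε) ^ (-m) - 1| ≤ 2 * ε := by
  have hp : 0 < 1 - ε := by linarith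
  rcases hm with rfl | rfl | rfl
  · simp [abs_of_nonneg h0]
    linarith
  · simp [h0]
  · rw [zpow_neg_one, show (1 - ε)⁻¹ - 1 = ε / (1 - ε) by field_simp; ring,
      abs_of_nonneg (by positivity), div_le_iff₀ hp]
    nlinarith

/-- Near the saddle point, `S̄` is real up to an error which is cubic on the unit torus and
of mixed second order transversally to it. -/
lemma norm_SbarC_zOf_sub_le (hstep : ∀ i ∈ S, ∀ j, i j = -1 ∨ i j = 0 ∨ i j = 1)
    (hw : ∀ i ∈ S, 0 < w i)
    (hsym : ∀ k : Fin d, SymmetricAxis (d + 1) S w (Fin.castSucc k))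
    (hzero : (∑ i ∈ S.filter fun i => i (Fin.last d) = -1, w i)
        = ∑ i ∈ S.filter fun i => i (Fin.last d) = 1, w i)
    {θ : Fin (d + 1) → ℝ} {δ : ℝ} (hθ : ∀ j, |θ j| ≤ δ) (hδ : (d + 1) * δ ≤ 1)
    {ε : ℝ} (h0 : 0 ≤ ε) (h1 : ε ≤ 1 / 2) :
    ‖SbarC d S w (zOf d ε θ) - (SbarRe d S w θ : ℂ)‖ ≤
      S1 d S w * (((d + 1) * δ) ^ 3 + (d + 1) * δ * (2 * ε) + 2 * ε ^ 2) := by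
  have hp : 0 < 1 - ε := by linarith
  have hlin : ∑ i ∈ S, (w i : ℂ) * (phase d i θ : ℂ) = 0 := by
    exact_mod_cast sum_mul_phase_eq_zero hstep hsym hzero θ
  have hrad := sum_mul_last hstep hzero (fun m => (1 - ε) ^ (-m) - 1) (by simp)
  set b := ∑ i ∈ S.filter fun i => i (Fin.last d) = 1, w i with hb
  have hb0 : 0 ≤ b := Finset.sum_nonneg fun i hi => (hw i (Finset.mem_filter.1 hi).1).le
  have hb1 : b ≤ S1 d S w :=
    Finset.sum_le_sum_of_subset_of_nonneg (Finset.filter_subset _ _) fun i hi _ => (hw i hi).le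
  have hradC : ∑ i ∈ S, (w i : ℂ) * ((1 - ε : ℂ) ^ (-(i (Fin.last d))) - 1) =
      ((b * (ε ^ 2 / (1 - ε)) : ℝ) : ℂ) := by
    have e : ((1 - ε) ^ (-(1 : ℤ)) - 1) + ((1 - ε) ^ (-(-1 : ℤ)) - 1) = ε ^ 2 / (1 - ε) := by
      rw [neg_neg, zpow_one, zpow_neg_one]
      field_simp
      ring
    rw [← e, ← hrad]
    push_cast
    rfl
  have hdecomp : SbarC d S w (zOf d ε θ) - (SbarRe d S w θ : ℂ) =
      ∑ i ∈ S, (w i : ℂ) * ((Complex.exp (Complex.I * phase d i θ) - 1) *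
          ((1 - ε : ℂ) ^ (-(i (Fin.last d))) - 1) +
          Complex.I * ((Real.sin (phase d i θ) - phase d i θ : ℝ) : ℂ)) +
        ((b * (ε ^ 2 / (1 - ε)) : ℝ) : ℂ) := by
    rw [← hradC, SbarC_zOf, SbarRe]
    have : Complex.I * ∑ i ∈ S, (w i : ℂ) * (phase d i θ : ℂ) = 0 := by rw [hlin, mul_zero]
    rw [← add_zero (∑ i ∈ S, (w i : ℂ) * _ + _), ← this, Finset.mul_sum, Complex.ofReal_sum,
      ← Finset.sum_sub_distrib, ← Finset.sum_add_distrib, ← Finset.sum_add_distrib]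
    refine Finset.sum_congr rfl fun i _ => ?_
    have he : Complex.exp (Complex.I * phase d i θ) =
        Complex.cos (phase d i θ) + Complex.sin (phase d i θ) * Complex.I := by
      rw [mul_comm, Complex.exp_mul_I]
    rw [he]
    push_cast
    ring
  rw [hdecomp]
  have hfirst := norm_sum_weight_le hw (C := (d + 1) * δ * (2 * ε) + ((d + 1) * δ) ^ 3)
    (f := fun i => (Complex.exp (Complex.I * phase d i θ) - 1) *
          ((1 - ε : ℂ) ^ (-(i (Fin.last d))) - 1) +
          Complex.I * ((Real.sin (phase d i θ) - phase d i θ : ℝ) : ℂ)) fun i hi => by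
    have hx := abs_phase_le (hstep i hi) hθ
    refine norm_add_le_of_le ?_ ?_
    · rw [norm_mul]
      have e1 := (Real.norm_exp_I_mul_ofReal_sub_one_le (x := phase d i θ)).trans hx
      have e2 : ‖(1 - ε : ℂ) ^ (-(i (Fin.last d))) - 1‖ ≤ 2 * ε := by
        have := abs_one_sub_zpow_neg_sub_one_le h0 h1 (hstep i hi (Fin.last d))
        rw [← Real.norm_eq_abs, ← Complex.norm_real] at this
        push_cast at this
        exact this
      exact mul_le_mul e1 e2 (norm_nonneg _) ((abs_nonneg _).trans hx)
    · rw [norm_mul, Complex.norm_I, one_mul, Complex.norm_real, Real.norm_eq_abs]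
      refine (Real.abs_sin_sub_self_le (hx.trans hδ)).trans ?_
      gcongr
  have hsecond : ‖((b * (ε ^ 2 / (1 - ε)) : ℝ) : ℂ)‖ ≤ S1 d S w * (2 * ε ^ 2) := by
    rw [Complex.norm_real, Real.norm_of_nonneg (by positivity)]
    refine mul_le_mul hb1 ?_ (by positivity) (S1_nonneg hw)
    rw [div_le_iff₀ hp]
    nlinarith [sq_nonneg ε]
  refine (norm_add_le_of_le hfirst hsecond).trans (le_of_eq ?_)
  ring

lemma S1_div_two_le_SbarRe (hstep : ∀ i ∈ S, ∀ j, i j = -1 ∨ i j = 0 ∨ i j = 1)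
    (hw : ∀ i ∈ S, 0 < w i) {θ : Fin (d + 1) → ℝ} {δ : ℝ} (hθ : ∀ j, |θ j| ≤ δ)
    (hδ : (d + 1) * δ ≤ 1) : S1 d S w / 2 ≤ SbarRe d S w θ := by
  rw [S1, SbarRe, Finset.sum_div]
  refine Finset.sum_le_sum fun i hi => ?_
  have hx := (abs_phase_le (hstep i hi) hθ).trans hδ
  have h1 := Real.one_sub_sq_div_two_le_cos (x := phase d i θ)
  have h2 := (sq_le_one_iff_abs_le_one _).2 hx
  have h3 := hw i hi
  nlinarith

lemma SbarRe_le_S1 (hw : ∀ i ∈ S, 0 < w i) (θ : Fin (d + 1) → ℝ) :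
    SbarRe d S w θ ≤ S1 d S w :=
  Finset.sum_le_sum fun i hi => mul_le_of_le_one_right (hw i hi).le (Real.cos_le_one _)

end Bounds

section Asymptotics

/-- Powers of a quantity tending to `1` faster than the exponent grows tend to `1`. -/
lemma _root_.Filter.Tendsto.pow_tendsto_one {X : Type*} {l : Filter X} {f : X → ℂ} {k : X → ℕ}
    (h : Tendsto (fun x => (k x : ℝ) * ‖f x - 1‖) l (nhds 0)) :
    Tendsto (fun x => f x ^ k x) l (nhds 1) := by
  rw [tendsto_iff_norm_sub_tendsto_zero]
  have h1 : Tendsto (fun x => Real.exp ((k x : ℝ) * ‖f x - 1‖) - 1) l (nhds 0) := by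
    simpa using (Real.continuous_exp.tendsto 0).comp h |>.sub_const 1
  refine squeeze_zero (fun x => norm_nonneg _) (fun x => ?_) h1
  simpa using Finset.norm_prod_one_add_sub_one_le (Finset.range (k x)) fun _ => f x - 1

lemma tendsto_setIntegral_div_setIntegral {X : Type*} [MeasurableSpace X] {μ : Measure X}
    {s : ℕ → Set X} {p : ℕ → X → ℝ} {f : ℕ → X → ℂ} (hs : ∀ n, MeasurableSet (s n))
    (hp : ∀ᶠ n in atTop, IntegrableOn (p n) (s n) μ)
    (hpos : ∀ᶠ n in atTop, 0 < ∫ x in s n, p n x ∂μ)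
    (hf : ∀ n, AEStronglyMeasurable (f n) (μ.restrict (s n)))
    (h : ∀ η > 0, ∀ᶠ n in atTop, ∀ x ∈ s n, ‖f n x - p n x‖ ≤ η * p n x) :
    Tendsto (fun n => (∫ x in s n, f n x ∂μ) / ((∫ x in s n, p n x ∂μ : ℝ) : ℂ))
      atTop (nhds 1) := by
  rw [Metric.tendsto_nhds]
  intro η hη
  filter_upwards [hp, hpos, h (η / 2) (by positivity)] with n hp hpos h
  have hpC : IntegrableOn (fun x => (p n x : ℂ)) (s n) μ := hp.ofReal
  have hd : IntegrableOn (fun x => f n x - p n x) (s n) μ :=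
    Integrable.mono' (hp.const_mul (η / 2)) ((hf n).sub hpC.aestronglyMeasurable)
      ((ae_restrict_iff' (hs n)).2 (Eventually.of_forall h))
  have hintegrable : IntegrableOn (f n) (s n) μ := by
    refine (hd.add hpC).congr (Eventually.of_forall fun x => ?_)
    simp
  have hbound : ‖(∫ x in s n, f n x ∂μ) - ((∫ x in s n, p n x ∂μ : ℝ) : ℂ)‖ ≤
      η / 2 * ∫ x in s n, p n x ∂μ := by
    rw [← integral_complex_ofReal, ← integral_sub hintegrable hpC, ← integral_const_mul]
    exact norm_integral_le_of_norm_le (hp.const_mul (η / 2))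
      ((ae_restrict_iff' (hs n)).2 (Eventually.of_forall h))
  have hne : ((∫ x in s n, p n x ∂μ : ℝ) : ℂ) ≠ 0 := by exact_mod_cast hpos.ne'
  rw [dist_eq_norm, div_sub_one hne, norm_div, Complex.norm_real, Real.norm_of_nonneg hpos.le,
    div_lt_iff₀ hpos]
  nlinarith

lemma tendsto_natCast_rpow_neg {y : ℝ} (hy : 0 < y) :
    Tendsto (fun n : ℕ => (n : ℝ) ^ (-y)) atTop (nhds 0) :=
  (tendsto_rpow_neg_atTop hy).comp tendsto_natCast_atTop_atTop

lemma mem_box_zero_iff {d : ℕ} {δ : ℝ} {θ : Fin (d + 1) → ℝ} :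
    θ ∈ box d (fun _ => 0) δ ↔ ∀ j, |θ j| < δ := by
  simp [box, argOf, abs_lt]

lemma isOpen_box {d : ℕ} (m : Fin (d + 1) → Fin 4) (δ : ℝ) : IsOpen (box d m δ) :=
  isOpen_set_pi Set.finite_univ fun _ _ => isOpen_Ioo

lemma volume_box_lt_top {d : ℕ} (m : Fin (d + 1) → Fin 4) (δ : ℝ) : volume (box d m δ) < ⊤ := by
  rw [box, Real.volume_pi_Ioo]
  exact ENNReal.prod_lt_top fun _ _ => ENNReal.ofReal_lt_top

/-- Convergence along this filter is convergence as `n → ∞`, uniformly over the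
boxes `|θ_j| < n^{-β}`. -/
def boxFilter (d : ℕ) (β : ℝ) : Filter (ℕ × (Fin (d + 1) → ℝ)) :=
  comap Prod.fst atTop ⊓ 𝓟 {x | x.2 ∈ box d (fun _ => 0) ((x.1 : ℝ) ^ (-β))}

variable {d : ℕ} {α β : ℝ}

lemma eventually_boxFilter_iff {P : ℕ × (Fin (d + 1) → ℝ) → Prop} :
    (∀ᶠ x in boxFilter d β, P x) ↔
      ∀ᶠ n : ℕ in atTop, ∀ θ ∈ box d (fun _ => 0) ((n : ℝ) ^ (-β)), P (n, θ) := by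
  rw [boxFilter, eventually_inf_principal, eventually_comap]
  refine eventually_congr (Eventually.of_forall fun n => ?_)
  constructor
  · intro h θ hθ
    exact h (n, θ) rfl hθ
  · rintro h ⟨m, θ⟩ rfl hθ
    exact h θ hθ

lemma tendsto_fst_boxFilter : Tendsto Prod.fst (boxFilter d β) atTop :=
  tendsto_comap.mono_left inf_le_left

lemma eventually_abs_le_boxFilter :
    ∀ᶠ x in boxFilter d β, ∀ j, |x.2 j| ≤ (x.1 : ℝ) ^ (-β) :=
  eventually_boxFilter_iff.2 <| Eventually.of_forall fun _ _ hθ j =>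
    (mem_box_zero_iff.1 hθ j).le

lemma tendsto_angle_boxFilter (hβ : 0 < β) (j : Fin (d + 1)) :
    Tendsto (fun x => x.2 j) (boxFilter d β) (nhds 0) :=
  squeeze_zero_norm' (eventually_abs_le_boxFilter.mono fun _ hx => hx j)
    ((tendsto_natCast_rpow_neg hβ).comp tendsto_fst_boxFilter)

variable {S : Finset (Fin (d + 1) → ℤ)} {w : (Fin (d + 1) → ℤ) → ℝ}

lemma eventually_mul_rpow_neg_le_one (hβ : 0 < β) (c : ℝ) :
    ∀ᶠ n : ℕ in atTop, c * (n : ℝ) ^ (-β) ≤ 1 := by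
  have h := (tendsto_natCast_rpow_neg hβ).const_mul c
  rw [mul_zero] at h
  exact (h.eventually_lt_const one_pos).mono fun _ hn => hn.le

/-- Uniformly over the boxes, `S̄(z)^n` is asymptotic to `(Re S̄(e^{iθ}))^n`, as soon as the
radial perturbation `e n` is small enough. -/
lemma tendsto_SbarC_div_SbarRe_pow (hstep : ∀ i ∈ S, ∀ j, i j = -1 ∨ i j = 0 ∨ i j = 1)
    (hw : ∀ i ∈ S, 0 < w i) (hS : 0 < S1 d S w)
    (hsym : ∀ k : Fin d, SymmetricAxis (d + 1) S w (Fin.castSucc k))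
    (hzero : (∑ i ∈ S.filter fun i => i (Fin.last d) = -1, w i)
        = ∑ i ∈ S.filter fun i => i (Fin.last d) = 1, w i)
    (hα : 1 / 2 < α) (hsum : 1 < α + β) (hβ : 1 / 3 < β)
    {e : ℕ → ℝ} (he0 : ∀ n, 0 ≤ e n) (he1 : ∀ n, e n ≤ (n : ℝ) ^ (-α)) :
    Tendsto (fun x : ℕ × (Fin (d + 1) → ℝ) =>
        (SbarC d S w (zOf d (e x.1) x.2) / (SbarRe d S w x.2 : ℂ)) ^ x.1)
      (boxFilter d β) (nhds 1) := by
  apply Filter.Tendsto.pow_tendsto_one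
  have hlim : Tendsto (fun n : ℕ => 2 * ((d + 1 : ℝ) ^ 3 * (n : ℝ) ^ (-(3 * β - 1)) +
      (d + 1 : ℝ) * 2 * (n : ℝ) ^ (-(α + β - 1)) + 2 * (n : ℝ) ^ (-(2 * α - 1)))) atTop
      (nhds 0) := by
    have h1 := (tendsto_natCast_rpow_neg (y := 3 * β - 1) (by linarith)).const_mul
      ((d + 1 : ℝ) ^ 3)
    have h2 := (tendsto_natCast_rpow_neg (y := α + β - 1) (by linarith)).const_mul
      ((d + 1 : ℝ) * 2)
    have h3 := (tendsto_natCast_rpow_neg (y := 2 * α - 1) (by linarith)).const_mul 2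
    simpa using ((h1.add h2).add h3).const_mul 2
  refine squeeze_zero' (Eventually.of_forall fun x => by positivity) ?_
    (hlim.comp tendsto_fst_boxFilter)
  filter_upwards [eventually_abs_le_boxFilter,
    tendsto_fst_boxFilter.eventually (eventually_gt_atTop 0),
    tendsto_fst_boxFilter.eventually
      (eventually_mul_rpow_neg_le_one (β := β) (by linarith) (d + 1)),
    tendsto_fst_boxFilter.eventually (eventually_mul_rpow_neg_le_one (β := α) (by linarith) 2)]
    with ⟨n, θ⟩ hθ hn hδ hε
  dsimp only [Function.comp] at *
  have hn' : (0 : ℝ) < n := by exact_mod_cast hn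
  have hlow := S1_div_two_le_SbarRe hstep hw hθ hδ
  have hpos : 0 < SbarRe d S w θ := by linarith
  have hb := norm_SbarC_zOf_sub_le hstep hw hsym hzero hθ hδ (he0 n) (by linarith [he1 n])
  have hne : (SbarRe d S w θ : ℂ) ≠ 0 := by exact_mod_cast hpos.ne'
  rw [div_sub_one hne, norm_div, Complex.norm_real, Real.norm_of_nonneg hpos.le]
  set δ := (n : ℝ) ^ (-β) with hδdef
  set ε := (n : ℝ) ^ (-α) with hεdef
  have hδ0 : 0 ≤ δ := by positivity
  have hmono : ((d + 1) * δ) ^ 3 + (d + 1) * δ * (2 * e n) + 2 * e n ^ 2 ≤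
      ((d + 1) * δ) ^ 3 + (d + 1) * δ * (2 * ε) + 2 * ε ^ 2 := by
    have := he0 n
    have := he1 n
    gcongr
  have hquot : ‖SbarC d S w (zOf d (e n) θ) - (SbarRe d S w θ : ℂ)‖ / SbarRe d S w θ ≤
      2 * (((d + 1) * δ) ^ 3 + (d + 1) * δ * (2 * ε) + 2 * ε ^ 2) := by
    rw [div_le_iff₀ hpos]
    have hE : 0 ≤ ((d + 1) * δ) ^ 3 + (d + 1) * δ * (2 * ε) + 2 * ε ^ 2 := by positivity
    have := mul_le_mul_of_nonneg_left hmono hS.le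
    nlinarith
  refine (mul_le_mul_of_nonneg_left hquot hn'.le).trans (le_of_eq ?_)
  have e1 : (n : ℝ) ^ (-(3 * β - 1)) = n * δ ^ 3 := by
    rw [hδdef, ← Real.rpow_natCast, ← Real.rpow_mul hn'.le, ← Real.rpow_one_add' hn'.le]
    · congr 1; push_cast; ring
    · push_cast; linarith
  have e2 : (n : ℝ) ^ (-(α + β - 1)) = n * δ * ε := by
    rw [hδdef, hεdef, mul_assoc, ← Real.rpow_add hn', ← Real.rpow_one_add' hn'.le (by linarith)]
    congr 1; ring
  have e3 : (n : ℝ) ^ (-(2 * α - 1)) = n * ε ^ 2 := by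
    rw [hεdef, ← Real.rpow_natCast, ← Real.rpow_mul hn'.le, ← Real.rpow_one_add' hn'.le]
    · congr 1; push_cast; ring
    · push_cast; linarith
  rw [e1, e2, e3]
  ring

/-- The factor of the residue integrand in front of `S̄(z)^n`, Jacobian included, without the
constant `I ^ (d + 1)`. -/
def amplitude (d : ℕ) (S : Finset (Fin (d + 1) → ℤ)) (w : (Fin (d + 1) → ℤ) → ℝ)
    (z : Fin (d + 1) → ℂ) : ℂ :=
  (∏ j : Fin d, (1 + z (Fin.castSucc j))) *
    ((BC d S w z - z (Fin.last d) ^ 2 * AC d S w z) / (BC d S w z * (1 - z (Fin.last d))))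

lemma resIntegrand_eq (n : ℕ) {ε : ℝ} (hε : ε ≠ 1) (θ : Fin (d + 1) → ℝ) :
    resIntegrand d S w n ε θ =
      Complex.I ^ (d + 1) * (amplitude d S w (zOf d ε θ) * SbarC d S w (zOf d ε θ) ^ n) := by
  have hz : ∏ j, zOf d ε θ j ≠ 0 := by
    refine Finset.prod_ne_zero_iff.2 fun j _ => ?_
    have : (1 - ε : ℂ) ≠ 0 := by
      rw [sub_ne_zero]
      exact_mod_cast hε.symm
    unfold zOf
    split_ifs <;> simp [this]
  rw [resIntegrand, amplitude, Finset.prod_mul_distrib, Finset.prod_const, Finset.card_univ,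
    Fintype.card_fin, div_mul_div_comm, mul_div_assoc', mul_right_comm (BC d S w _),
    ← mul_div_mul_right _ (BC d S w (zOf d ε θ) * (1 - zOf d ε θ (Fin.last d))) hz]
  ring

lemma measurable_resIntegrand (n : ℕ) (ε : ℝ) : Measurable (resIntegrand d S w n ε) := by
  have hz : ∀ j, Measurable (fun θ => zOf d ε θ j) := by
    intro j
    unfold zOf
    fun_prop
  unfold resIntegrand BC AC SbarC
  fun_prop

lemma measurable_SbarC_zOf (ε : ℝ) : Measurable (fun θ => SbarC d S w (zOf d ε θ)) := by
  have hz : ∀ j, Measurable (fun θ => zOf d ε θ j) := by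
    intro j
    unfold zOf
    fun_prop
  unfold SbarC
  fun_prop

lemma continuous_SbarRe : Continuous (SbarRe d S w) := by
  unfold SbarRe phase
  fun_prop

lemma tendsto_amplitude (hstep : ∀ i ∈ S, ∀ j, i j = -1 ∨ i j = 0 ∨ i j = 1)
    (hw : ∀ i ∈ S, 0 < w i)
    (hsym : ∀ k : Fin d, SymmetricAxis (d + 1) S w (Fin.castSucc k))
    (hfwd : ∃ i ∈ S, i (Fin.last d) = 1)
    (hzero : (∑ i ∈ S.filter fun i => i (Fin.last d) = -1, w i)
        = ∑ i ∈ S.filter fun i => i (Fin.last d) = 1, w i)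
    (hα : 0 < α) (hαβ : α < 2 * β) :
    Tendsto (fun x : ℕ × (Fin (d + 1) → ℝ) =>
        amplitude d S w (zOf d ((x.1 : ℝ) ^ (-α)) x.2))
      (boxFilter d β) (nhds (2 ^ (d + 1))) := by
  have hβ : 0 < β := by linarith
  set b := ∑ i ∈ S.filter fun i => i (Fin.last d) = 1, w i with hb
  have hbpos : 0 < b := by
    obtain ⟨i, hi, hi1⟩ := hfwd
    exact Finset.sum_pos (fun i hi => hw i (Finset.mem_filter.1 hi).1)
      ⟨i, Finset.mem_filter.2 ⟨hi, hi1⟩⟩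
  have hexp : ∀ j, Tendsto (fun x : ℕ × (Fin (d + 1) → ℝ) =>
      Complex.exp (Complex.I * (x.2 j : ℂ))) (boxFilter d β) (nhds 1) := by
    intro j
    have hc : Continuous fun t : ℝ => Complex.exp (Complex.I * (t : ℂ)) := by fun_prop
    simpa [Function.comp_def] using (hc.tendsto 0).comp (tendsto_angle_boxFilter hβ j)
  have hεlim := (tendsto_natCast_rpow_neg hα).comp (tendsto_fst_boxFilter (d := d) (β := β))
  have hz : Tendsto (fun x : ℕ × (Fin (d + 1) → ℝ) =>
      zOf d ((x.1 : ℝ) ^ (-α)) x.2 (Fin.last d)) (boxFilter d β) (nhds 1) := by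
    simp only [zOf_last]
    have h1 := (Complex.continuous_ofReal.tendsto 0).comp hεlim
    simpa using (h1.const_sub 1).mul (hexp (Fin.last d))
  have hprod : Tendsto (fun x : ℕ × (Fin (d + 1) → ℝ) =>
      ∏ j : Fin d, (1 + zOf d ((x.1 : ℝ) ^ (-α)) x.2 (Fin.castSucc j)))
      (boxFilter d β) (nhds (2 ^ d)) := by
    simp only [zOf_castSucc]
    have := tendsto_finsetProd (Finset.univ : Finset (Fin d)) fun j _ =>
      (hexp (Fin.castSucc j)).const_add 1
    simpa [one_add_one_eq_two] using this
  have hsq : Tendsto (fun n : ℕ => b * (d * (n : ℝ) ^ (-β)) ^ 2) atTop (nhds 0) := by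
    simpa using (((tendsto_natCast_rpow_neg hβ).const_mul (d : ℝ)).pow 2).const_mul b
  have hsmall := tendsto_fst_boxFilter (d := d) (β := β) |>.eventually
    (eventually_mul_rpow_neg_le_one hβ d)
  have hcoef : ∀ c : ℤ, (∑ i ∈ S.filter fun i => i (Fin.last d) = c, w i) = b →
      ∀ᶠ x : ℕ × (Fin (d + 1) → ℝ) in boxFilter d β,
        ‖∑ i ∈ S.filter (fun i => i (Fin.last d) = c), (w i : ℂ) *
          ∏ j : Fin d, zOf d ((x.1 : ℝ) ^ (-α)) x.2 (Fin.castSucc j) ^ (i (Fin.castSucc j)) - b‖ ≤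
          b * (d * (x.1 : ℝ) ^ (-β)) ^ 2 := by
    intro c hc
    filter_upwards [eventually_abs_le_boxFilter, hsmall] with x hx hδ
    have := norm_sum_exp_phaseHat_sub_le (S := S.filter fun i => i (Fin.last d) = c) (w := w)
      (fun i hi => hstep i (Finset.mem_filter.1 hi).1)
      (fun i hi => hw i (Finset.mem_filter.1 hi).1)
      (fun k => symmetricAxis_filter_last (hsym k) c) hx hδ
    rw [S1, hc] at this
    simpa only [prod_zOf_zpow] using this
  have hB := hcoef 1 rfl
  have hA := hcoef (-1) hzero
  have hBlim : Tendsto (fun x : ℕ × (Fin (d + 1) → ℝ) =>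
      BC d S w (zOf d ((x.1 : ℝ) ^ (-α)) x.2)) (boxFilter d β) (nhds (b : ℂ)) := by
    rw [tendsto_iff_norm_sub_tendsto_zero]
    exact squeeze_zero' (Eventually.of_forall fun _ => norm_nonneg _) hB
      (hsq.comp tendsto_fst_boxFilter)
  have hbne : (b : ℂ) ≠ 0 := by exact_mod_cast hbpos.ne'
  have hεlt : ∀ᶠ x : ℕ × (Fin (d + 1) → ℝ) in boxFilter d β,
      0 < (x.1 : ℝ) ^ (-α) ∧ (x.1 : ℝ) ^ (-α) < 1 := by
    filter_upwards [hεlim.eventually_lt_const one_pos,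
      tendsto_fst_boxFilter.eventually (eventually_gt_atTop 0)] with x h1 h2
    exact ⟨Real.rpow_pos_of_pos (by exact_mod_cast h2) _, h1⟩
  have hden : ∀ᶠ x : ℕ × (Fin (d + 1) → ℝ) in boxFilter d β,
      (x.1 : ℝ) ^ (-α) ≤ ‖1 - zOf d ((x.1 : ℝ) ^ (-α)) x.2 (Fin.last d)‖ := by
    filter_upwards [hεlt] with x hx
    have hn : ‖zOf d ((x.1 : ℝ) ^ (-α)) x.2 (Fin.last d)‖ = 1 - (x.1 : ℝ) ^ (-α) := by
      rw [zOf_last, norm_mul, Complex.norm_exp_I_mul_ofReal, mul_one, ← Complex.ofReal_one,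
        ← Complex.ofReal_sub, Complex.norm_real, Real.norm_of_nonneg (by linarith)]
    have := norm_sub_norm_le (1 : ℂ) (zOf d ((x.1 : ℝ) ^ (-α)) x.2 (Fin.last d))
    rw [hn, norm_one] at this
    linarith
  have hdiff : Tendsto (fun x : ℕ × (Fin (d + 1) → ℝ) =>
      (BC d S w (zOf d ((x.1 : ℝ) ^ (-α)) x.2) - AC d S w (zOf d ((x.1 : ℝ) ^ (-α)) x.2)) /
        (1 - zOf d ((x.1 : ℝ) ^ (-α)) x.2 (Fin.last d))) (boxFilter d β) (nhds 0) := by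
    have hlim : Tendsto (fun n : ℕ => 2 * b * d ^ 2 * (n : ℝ) ^ (-(2 * β - α))) atTop
        (nhds 0) := by
      simpa using (tendsto_natCast_rpow_neg (y := 2 * β - α) (by linarith)).const_mul
        (2 * b * d ^ 2)
    refine squeeze_zero_norm' ?_ (hlim.comp tendsto_fst_boxFilter)
    filter_upwards [hA, hB, hden, hεlt,
      tendsto_fst_boxFilter.eventually (eventually_gt_atTop 0)] with x hA hB hden hε hn
    have hn' : (0 : ℝ) < x.1 := by exact_mod_cast hn
    rw [norm_div, div_le_iff₀ (hε.1.trans_le hden)]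
    have hBA := norm_sub_le_of_le hB hA
    rw [sub_sub_sub_cancel_right] at hBA
    have hcoef0 : 0 ≤ 2 * b * d ^ 2 * (x.1 : ℝ) ^ (-(2 * β - α)) := by positivity
    refine hBA.trans (le_trans (le_of_eq ?_) (mul_le_mul_of_nonneg_left hden hcoef0))
    have e : (x.1 : ℝ) ^ (-(2 * β - α)) * (x.1 : ℝ) ^ (-α) = ((x.1 : ℝ) ^ (-β)) ^ 2 := by
      rw [← Real.rpow_add hn', ← Real.rpow_natCast, ← Real.rpow_mul hn'.le]
      congr 1
      push_cast
      ring
    rw [Function.comp_apply, mul_assoc _ _ ((x.1 : ℝ) ^ (-α)), e]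
    ring
  have hfinal := hprod.mul ((hz.const_add 1).add (((hz.pow 2).mul hdiff).div hBlim hbne))
  have hval : (2 : ℂ) ^ d * (1 + 1 + 1 ^ 2 * 0 / (b : ℂ)) = 2 ^ (d + 1) := by
    rw [mul_zero, zero_div, add_zero, one_add_one_eq_two, pow_succ]
  rw [hval] at hfinal
  refine hfinal.congr' ?_
  filter_upwards [hBlim.eventually_ne hbne, hden, hεlt] with x hBne hden hε
  have hne : 1 - zOf d ((x.1 : ℝ) ^ (-α)) x.2 (Fin.last d) ≠ 0 :=
    norm_pos_iff.1 (hε.1.trans_le hden)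
  rw [amplitude, Pi.div_apply]
  congr 1
  field_simp
  ring

/-- A sequence of functions uniformly asymptotic to `(Re S̄(e^{iθ}))^n` on the boxes has the
same integrals up to a factor tending to `1`. -/
lemma tendsto_setIntegral_box_div (hstep : ∀ i ∈ S, ∀ j, i j = -1 ∨ i j = 0 ∨ i j = 1)
    (hw : ∀ i ∈ S, 0 < w i) (hS : 0 < S1 d S w) (hβ : 0 < β)
    {f : ℕ → (Fin (d + 1) → ℝ) → ℂ} (hf : ∀ n, Measurable (f n))
    (h : Tendsto (fun x : ℕ × (Fin (d + 1) → ℝ) => f x.1 x.2 / (SbarRe d S w x.2 : ℂ) ^ x.1)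
      (boxFilter d β) (nhds 1)) :
    (∀ᶠ n : ℕ in atTop,
      0 < ∫ θ in box d (fun _ => 0) ((n : ℝ) ^ (-β)), SbarRe d S w θ ^ n) ∧
    Tendsto (fun n : ℕ => (∫ θ in box d (fun _ => 0) ((n : ℝ) ^ (-β)), f n θ) /
        ((∫ θ in box d (fun _ => 0) ((n : ℝ) ^ (-β)), SbarRe d S w θ ^ n : ℝ) : ℂ))
      atTop (nhds 1) := by
  have hlow : ∀ᶠ n : ℕ in atTop, ∀ θ ∈ box d (fun _ => 0) ((n : ℝ) ^ (-β)),
      0 < SbarRe d S w θ := by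
    filter_upwards [eventually_mul_rpow_neg_le_one hβ (d + 1)] with n hn θ hθ
    have := S1_div_two_le_SbarRe hstep hw (fun j => (mem_box_zero_iff.1 hθ j).le) hn
    linarith
  have hintegrable : ∀ᶠ n : ℕ in atTop, IntegrableOn (fun θ => SbarRe d S w θ ^ n)
      (box d (fun _ => 0) ((n : ℝ) ^ (-β))) volume := by
    filter_upwards [hlow] with n hn
    refine Measure.integrableOn_of_bounded (M := S1 d S w ^ n) (volume_box_lt_top _ _).ne
      (continuous_SbarRe.pow n).aestronglyMeasurable ?_
    refine (ae_restrict_iff' (isOpen_box _ _).measurableSet).2 (Eventually.of_forall fun θ hθ => ?_)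
    rw [norm_pow, Real.norm_of_nonneg (hn θ hθ).le]
    exact pow_le_pow_left₀ (hn θ hθ).le (SbarRe_le_S1 hw θ) n
  have hpos : ∀ᶠ n : ℕ in atTop,
      0 < ∫ θ in box d (fun _ => 0) ((n : ℝ) ^ (-β)), SbarRe d S w θ ^ n := by
    filter_upwards [hlow, hintegrable, eventually_gt_atTop 0] with n hlow hintegrable hn
    have hδ : 0 < (n : ℝ) ^ (-β) := Real.rpow_pos_of_pos (by exact_mod_cast hn) _
    have hmeas := (isOpen_box (d := d) (fun _ => 0) ((n : ℝ) ^ (-β))).measurableSet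
    rw [setIntegral_pos_iff_support_of_nonneg_ae ((ae_restrict_iff' hmeas).2
      (Eventually.of_forall fun θ hθ => (pow_pos (hlow θ hθ) n).le)) hintegrable,
      Set.inter_eq_self_of_subset_right
        fun θ hθ => Function.mem_support.2 (pow_pos (hlow θ hθ) n).ne']
    exact (isOpen_box _ _).measure_pos volume ⟨0, mem_box_zero_iff.2 fun j => by simpa using hδ⟩
  refine ⟨hpos, tendsto_setIntegral_div_setIntegral (fun n => (isOpen_box _ _).measurableSet)
    hintegrable
    hpos (fun n => (hf n).aestronglyMeasurable) fun η hη => ?_⟩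
  filter_upwards [eventually_boxFilter_iff.1 (Metric.tendsto_nhds.1 h η hη), hlow]
    with n hn hlow θ hθ
  have hp := pow_pos (hlow θ hθ) n
  have hne : (SbarRe d S w θ : ℂ) ^ n ≠ 0 := by exact_mod_cast hp.ne'
  have := hn θ hθ
  rw [dist_eq_norm, div_sub_one hne, norm_div, ← Complex.ofReal_pow, Complex.norm_real,
    Real.norm_of_nonneg hp.le, div_lt_iff₀ hp] at this
  exact this.le

end Asymptotics

end ZeroDrift


/-- Proposition (reduction at `w = 1`): the residue integral over `N_1` is
asymptotically equivalent to the saddle-point integral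
`π^{-(d+1)} ∫_{(-δ,δ)^{d+1}} S̄(e^{iθ})^n dθ`. -/
theorem reduction_at_one
    (d : ℕ) (S : Finset (Fin (d + 1) → ℤ)) (w : (Fin (d + 1) → ℤ) → ℝ)
    (hstep : ∀ i ∈ S, (∀ j, i j = -1 ∨ i j = 0 ∨ i j = 1) ∧ i ≠ 0)
    (hw : ∀ i ∈ S, 0 < w i)
    (hsym : ∀ k : Fin d, SymmetricAxis (d + 1) S w (Fin.castSucc k))
    (hfwd : ∀ k : Fin (d + 1), ∃ i ∈ S, i k = 1)
    (hbwd : ∀ k : Fin (d + 1), ∃ i ∈ S, i k = -1)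
    (hzero : (∑ i ∈ S.filter fun i => i (Fin.last d) = -1, w i)
        = ∑ i ∈ S.filter fun i => i (Fin.last d) = 1, w i)
    (α β : ℝ) (hα : 1 / 2 < α) (hαβ : α < 2 * β) (hsum : 1 < α + β)
    (hβ1 : 1 / 3 < β) (hβ2 : β < 1 / 2) :
    Tendsto (fun n : ℕ =>
      (((2 * (π : ℂ) * Complex.I) ^ (d + 1))⁻¹ *
          ZeroDrift.resIntegral d S w n ((n : ℝ) ^ (-α)) ((n : ℝ) ^ (-β))
            (fun _ => 0)) /
        ((((π : ℝ) ^ (d + 1))⁻¹ : ℝ) •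
          ∫ θ in ZeroDrift.box d (fun _ => 0) ((n : ℝ) ^ (-β)),
            ZeroDrift.SbarC d S w (fun j => Complex.exp (Complex.I * θ j)) ^ n))
      atTop (nhds 1) := by
  have hstep' : ∀ i ∈ S, ∀ j, i j = -1 ∨ i j = 0 ∨ i j = 1 := fun i hi => (hstep i hi).1
  have hS : 0 < ZeroDrift.S1 d S w := by
    obtain ⟨i, hi, -⟩ := hfwd (Fin.last d)
    exact Finset.sum_pos hw ⟨i, hi⟩
  have hα0 : 0 < α := by linarith
  have hβ0 : 0 < β := by linarith
  have hres := ZeroDrift.tendsto_setIntegral_box_div hstep' hw hS hβ0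
    (f := fun n θ => ((2 * Complex.I) ^ (d + 1))⁻¹ *
      ZeroDrift.resIntegrand d S w n ((n : ℝ) ^ (-α)) θ)
    (fun n => (ZeroDrift.measurable_resIntegrand n _).const_mul _) (by
      have h1 := ZeroDrift.tendsto_SbarC_div_SbarRe_pow hstep' hw hS hsym hzero hα hsum hβ1
        (e := fun n => (n : ℝ) ^ (-α)) (fun n => by positivity) fun n => le_rfl
      have h2 := ZeroDrift.tendsto_amplitude hstep' hw hsym (hfwd (Fin.last d)) hzero hα0 hαβ
      have h3 := (h2.div_const (2 ^ (d + 1))).mul h1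
      rw [div_self (pow_ne_zero _ two_ne_zero), one_mul] at h3
      refine h3.congr' ?_
      filter_upwards [((ZeroDrift.tendsto_natCast_rpow_neg hα0).comp
        ZeroDrift.tendsto_fst_boxFilter).eventually_ne zero_ne_one] with x hx
      rw [Function.comp_apply] at hx
      rw [ZeroDrift.resIntegrand_eq _ hx, mul_pow, div_pow]
      field_simp)
  have hsaddle := ZeroDrift.tendsto_setIntegral_box_div hstep' hw hS hβ0
    (f := fun n θ => ZeroDrift.SbarC d S w (ZeroDrift.zOf d 0 θ) ^ n)
    (fun n => (ZeroDrift.measurable_SbarC_zOf 0).pow_const n) (by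
      simpa only [div_pow] using
        ZeroDrift.tendsto_SbarC_div_SbarRe_pow hstep' hw hS hsym hzero hα hsum hβ1
          (e := fun _ => 0) (fun _ => le_rfl) fun n => by positivity)
  have hratio := hres.2.div hsaddle.2 one_ne_zero
  rw [div_one] at hratio
  refine hratio.congr' ?_
  filter_upwards [hres.1] with n hn
  have hne := Complex.ofReal_ne_zero.2 hn.ne'
  rw [Pi.div_apply, div_div_div_cancel_right₀ hne, integral_const_mul]
  simp only [ZeroDrift.zOf_zero, ZeroDrift.resIntegral]
  have hπ : (π : ℂ) ^ (d + 1) ≠ 0 := pow_ne_zero _ (by exact_mod_cast Real.pi_ne_zero)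
  rw [Complex.real_smul, show 2 * (π : ℂ) * Complex.I = π * (2 * Complex.I) by ring,
    mul_pow (π : ℂ), mul_inv, mul_assoc]
  push_cast
  rw [mul_div_mul_left _ _ (inv_ne_zero hπ)]

end
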